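/- For a fixed positive integer q, the density of the floor-value set restricted to any residue class a mod q (1 ≤ a ≤ q) is asymptotically independent of a: S(x;q,a) / S(x) → 1/q as x → ∞. -/

import Mathlib

/-! With `s = ⌊√N⌋`, the floor values of `N` are the integers `m ≤ s` together with the values
`⌊N / n⌋` for `n ≤ s`; the latter are pairwise distinct and the two families share at most one
element. The first family is visibly uniform modulo `q`, so it suffices that `⌊N / n⌋`, `n ≤ s`, is
asymptotically uniform modulo `q`, which follows once the points `N / n` equidistribute in
`ℝ / qℤ`. Near `n = t s` the sequence `n ↦ N / n` is almost an arithmetic progression of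
difference `-1 / t ^ 2`, no nonzero multiple of which vanishes modulo `q`, for almost every `t`.
Hence each nontrivial exponential sum is locally a geometric sum with ratio different from `1`;
averaging over short windows makes it `o(s)` by dominated convergence in `t`, and Weyl's criterion
applies. No uniformity in `t`, hence no quantitative estimate for exponential sums, is needed. -/

open Filter Topology MeasureTheory
open Finset (range Icc)

section VanDerCorput

variable {E : Type*} [SeminormedAddCommGroup E] {v : ℕ → E} {C : ℝ}

theorem norm_sum_range_sub_sum_range_add_le (hv : ∀ n, ‖v n‖ ≤ C) (M h : ℕ) :
    ‖∑ j ∈ range M, v j - ∑ j ∈ range M, v (j + h)‖ ≤ 2 * (h * C) := by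
  have hshift : ∑ j ∈ range M, v j - ∑ j ∈ range M, v (j + h) =
      ∑ j ∈ range h, v j - ∑ j ∈ range h, v (M + j) := by
    have hhead := Finset.sum_range_add v h M
    rw [add_comm h M, Finset.sum_range_add v M h] at hhead
    simp only [add_comm _ h]
    rw [sub_eq_sub_iff_add_eq_add, hhead]
  have hblock (w : ℕ → E) (hw : ∀ n, ‖w n‖ ≤ C) : ‖∑ j ∈ range h, w j‖ ≤ h * C := by
    simpa using norm_sum_le_of_le (range h) fun n _ => hw n
  rw [hshift, two_mul]
  exact norm_sub_le_of_le (hblock v hv) (hblock _ fun n => hv (M + n))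

theorem norm_sum_range_le_sum_norm_sum_window_div [NormedSpace ℝ E] (hv : ∀ n, ‖v n‖ ≤ C)
    (M : ℕ) {H : ℕ} (hH : H ≠ 0) :
    ‖∑ j ∈ range M, v j‖ ≤
      ∑ j ∈ range M, ‖∑ h ∈ range H, v (j + h)‖ / H + 2 * (H * C) := by
  have hC : 0 ≤ C := (norm_nonneg _).trans (hv 0)
  have hH0 : (0 : ℝ) < H := by positivity
  have hsplit : (H : ℝ) • ∑ j ∈ range M, v j =
      ∑ j ∈ range M, ∑ h ∈ range H, v (j + h) +
        ∑ h ∈ range H, (∑ j ∈ range M, v j - ∑ j ∈ range M, v (j + h)) := by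
    rw [Finset.sum_comm, ← Finset.sum_add_distrib]
    simp [Nat.cast_smul_eq_nsmul]
  have hdefect : ∀ h ∈ range H,
      ‖∑ j ∈ range M, v j - ∑ j ∈ range M, v (j + h)‖ ≤ 2 * (H * C) := fun h hh =>
    (norm_sum_range_sub_sum_range_add_le hv M h).trans <| by
      gcongr
      exact (Finset.mem_range.1 hh).le
  refine le_of_mul_le_mul_left ?_ hH0
  calc H * ‖∑ j ∈ range M, v j‖ = ‖(H : ℝ) • ∑ j ∈ range M, v j‖ := by simp [norm_smul]
    _ ≤ ∑ j ∈ range M, ‖∑ h ∈ range H, v (j + h)‖ + ∑ _h ∈ range H, 2 * (H * C) := by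
      rw [hsplit]
      exact norm_add_le_of_le (norm_sum_le _ _) (norm_sum_le_of_le _ hdefect)
    _ = H * (∑ j ∈ range M, ‖∑ h ∈ range H, v (j + h)‖ / H + 2 * (H * C)) := by
      rw [← Finset.sum_div, mul_add, mul_div_cancel₀ _ hH0.ne']
      simp

end VanDerCorput

theorem sum_range_eq_smul_integral_floor {E : Type*} [NormedAddCommGroup E] [NormedSpace ℝ E]
    [CompleteSpace E] (φ : ℕ → E) (M : ℕ) :
    ∑ j ∈ range M, φ j = (M : ℝ) • ∫ t in (0 : ℝ)..1, φ ⌊t * M⌋₊ := by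
  have hstep (j : ℕ) : Set.EqOn (fun _ => φ j) (fun s : ℝ => φ ⌊s⌋₊)
      (Set.Ioo (j : ℝ) (j + 1 : ℕ)) := fun s hs => by
    have : ⌊s⌋₊ = j := (Nat.floor_eq_iff (j.cast_nonneg.trans hs.1.le)).2
      ⟨hs.1.le, by exact_mod_cast hs.2⟩
    simp only [this]
  have hle (j : ℕ) : (j : ℝ) ≤ (j + 1 : ℕ) := by simp
  have hint (j : ℕ) : IntervalIntegrable (fun s : ℝ => φ ⌊s⌋₊) volume j (j + 1 : ℕ) :=
    (intervalIntegrable_const (c := φ j)).congr_uIoo (by rw [Set.uIoo_of_le (hle j)]; exact hstep j)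
  have hpiece (j : ℕ) : ∫ s in (j : ℝ)..(j + 1 : ℕ), φ ⌊s⌋₊ = φ j := by
    rw [← intervalIntegral.integral_congr_Ioo_of_le (hle j) (hstep j)]
    simp
  rcases eq_or_ne M 0 with rfl | hM
  · simp
  · have hM' : (M : ℝ) ≠ 0 := by exact_mod_cast hM
    rw [intervalIntegral.integral_comp_mul_right (fun s => φ ⌊s⌋₊) hM', zero_mul, one_mul,
      smul_inv_smul₀ hM', ← Nat.cast_zero,
      ← intervalIntegral.sum_integral_adjacent_intervals fun j _ => hint j]
    exact Finset.sum_congr rfl fun j _ => (hpiece j).symm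

theorem norm_sum_range_div_le_one {E : Type*} [SeminormedAddCommGroup E] {u : ℕ → E}
    (hu : ∀ n, ‖u n‖ ≤ 1) (H : ℕ) :
    ‖∑ h ∈ range H, u h‖ / H ≤ 1 :=
  div_le_one_of_le₀ (by simpa using norm_sum_le_of_le (range H) fun n _ => hu n) H.cast_nonneg

theorem tendsto_norm_geom_sum_div_zero {K : Type*} [NormedDivisionRing K] {z : K} (hz : ‖z‖ ≤ 1)
    (hz1 : z ≠ 1) :
    Tendsto (fun H : ℕ => ‖∑ h ∈ range H, z ^ h‖ / H) atTop (𝓝 0) := by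
  refine squeeze_zero (fun H => by positivity) (fun H => ?_)
    (tendsto_const_div_atTop_nhds_zero_nat (2 / ‖z - 1‖))
  rw [geom_sum_eq hz1, norm_div]
  gcongr
  calc ‖z ^ H - 1‖ ≤ ‖z‖ ^ H + 1 := by simpa using norm_sub_le (z ^ H) 1
    _ ≤ 2 := by linarith [pow_le_one₀ (n := H) (norm_nonneg z) hz]

section LocallyGeometric

variable {ι : Type*} {l : Filter ι} {M : ι → ℕ} {v : ι → ℕ → Circle} {w : ℝ → Circle}

theorem norm_sum_range_coe_circle_eq (u : ℕ → Circle) (n H : ℕ) :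
    ‖∑ h ∈ range H, (u (n + h) : ℂ)‖ = ‖∑ h ∈ range H, ((u (n + h) / u n : Circle) : ℂ)‖ := by
  have hfactor : ∑ h ∈ range H, (u (n + h) : ℂ) =
      u n * ∑ h ∈ range H, ((u (n + h) / u n : Circle) : ℂ) := by
    rw [Finset.mul_sum]
    exact Finset.sum_congr rfl fun h _ => by rw [← Circle.coe_mul, mul_div_cancel]
  rw [hfactor, norm_mul, Circle.norm_coe, one_mul]

theorem tendsto_integral_norm_window_average [l.IsCountablyGenerated]
    (hvw : ∀ᵐ t : ℝ, t ∈ Set.Ioc 0 1 → ∀ h : ℕ,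
      Tendsto (fun i => v i (⌊t * M i⌋₊ + h) / v i ⌊t * M i⌋₊) l (𝓝 (w t ^ h))) (H : ℕ) :
    Tendsto (fun i => ∫ t in (0 : ℝ)..1, ‖∑ h ∈ range H, (v i (⌊t * M i⌋₊ + h) : ℂ)‖ / H) l
      (𝓝 (∫ t in (0 : ℝ)..1, ‖∑ h ∈ range H, (w t : ℂ) ^ h‖ / H)) := by
  refine intervalIntegral.tendsto_integral_filter_of_dominated_convergence (fun _ => 1)
    (Eventually.of_forall fun i => Measurable.aestronglyMeasurable ?_)
    (Eventually.of_forall fun i => ae_of_all _ fun t _ => ?_) intervalIntegrable_const ?_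
  · exact (measurable_from_nat (f := fun n => ‖∑ h ∈ range H, (v i (n + h) : ℂ)‖ / H)).comp
      (Nat.measurable_floor.comp (measurable_id.mul_const _))
  · rw [Real.norm_of_nonneg (by positivity)]
    exact norm_sum_range_div_le_one (fun n => (Circle.norm_coe _).le) H
  · filter_upwards [hvw] with t ht hmem
    rw [Set.uIoc_of_le zero_le_one] at hmem
    simp only [norm_sum_range_coe_circle_eq, ← Circle.coe_pow]
    exact (tendsto_finsetSum _ fun h _ =>
      (continuous_subtype_val.tendsto _).comp (ht hmem h)).norm.div_const _

theorem tendsto_integral_norm_geom_sum_div_zero (hw : Measurable fun t => (w t : ℂ))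
    (hw1 : ∀ᵐ t : ℝ, t ∈ Set.Ioc 0 1 → w t ≠ 1) :
    Tendsto (fun H : ℕ => ∫ t in (0 : ℝ)..1, ‖∑ h ∈ range H, (w t : ℂ) ^ h‖ / H) atTop
      (𝓝 0) := by
  rw [show 𝓝 (0 : ℝ) = 𝓝 (∫ _ in (0 : ℝ)..1, (0 : ℝ)) by simp]
  refine intervalIntegral.tendsto_integral_filter_of_dominated_convergence (fun _ => 1)
    (Eventually.of_forall fun H => Measurable.aestronglyMeasurable ?_)
    (Eventually.of_forall fun H => ae_of_all _ fun t _ => ?_) intervalIntegrable_const ?_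
  · fun_prop
  · rw [Real.norm_of_nonneg (by positivity)]
    exact norm_sum_range_div_le_one (fun n => by simp [Circle.norm_coe]) H
  · filter_upwards [hw1] with t ht hmem
    rw [Set.uIoc_of_le zero_le_one] at hmem
    exact tendsto_norm_geom_sum_div_zero (Circle.norm_coe _).le (Circle.coe_eq_one.not.2 (ht hmem))

theorem norm_sum_range_div_le_integral_window_average (u : ℕ → Circle) (M : ℕ) {H : ℕ}
    (hH : H ≠ 0) :
    ‖∑ j ∈ range M, (u j : ℂ)‖ / M ≤
      (∫ t in (0 : ℝ)..1, ‖∑ h ∈ range H, (u (⌊t * M⌋₊ + h) : ℂ)‖ / H) + 2 * H / M := by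
  rcases eq_or_ne M 0 with rfl | hM
  · simp only [Nat.cast_zero, div_zero, add_zero]
    exact intervalIntegral.integral_nonneg zero_le_one fun t _ => by positivity
  · have hM0 : (0 : ℝ) < M := by positivity
    have hshift := norm_sum_range_le_sum_norm_sum_window_div
      (fun n => (Circle.norm_coe (u n)).le) M hH
    rw [sum_range_eq_smul_integral_floor (fun n => ‖∑ h ∈ range H, (u (n + h) : ℂ)‖ / H) M,
      smul_eq_mul, mul_one] at hshift
    rw [div_le_iff₀ hM0, add_mul, div_mul_cancel₀ _ hM0.ne', mul_comm _ (M : ℝ)]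
    exact hshift

theorem tendsto_average_zero_of_locally_geometric [l.IsCountablyGenerated]
    (hM : Tendsto M l atTop) (hw : Measurable fun t => (w t : ℂ))
    (hvw : ∀ᵐ t : ℝ, t ∈ Set.Ioc 0 1 → ∀ h : ℕ,
      Tendsto (fun i => v i (⌊t * M i⌋₊ + h) / v i ⌊t * M i⌋₊) l (𝓝 (w t ^ h)))
    (hw1 : ∀ᵐ t : ℝ, t ∈ Set.Ioc 0 1 → w t ≠ 1) :
    Tendsto (fun i => (∑ j ∈ range (M i), (v i j : ℂ)) / M i) l (𝓝 0) := by
  refine tendsto_zero_iff_norm_tendsto_zero.2 (tendsto_order.2 ⟨fun ε hε =>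
    Eventually.of_forall fun i => hε.trans_le (norm_nonneg _), fun ε hε => ?_⟩)
  obtain ⟨H, hHε, hH⟩ := (((tendsto_integral_norm_geom_sum_div_zero hw hw1).eventually_lt_const
    hε).and (eventually_ne_atTop 0)).exists
  have herror : Tendsto (fun i => 2 * (H : ℝ) / M i) l (𝓝 0) :=
    (tendsto_const_div_atTop_nhds_zero_nat _).comp hM
  have hbound := (tendsto_integral_norm_window_average hvw H).add herror
  rw [add_zero] at hbound
  filter_upwards [hbound.eventually_lt_const hHε] with i hi
  rw [norm_div, Complex.norm_natCast]
  exact (norm_sum_range_div_le_integral_window_average (v i) (M i) hH).trans_lt hi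

end LocallyGeometric

section Weyl

variable {T : ℝ} [Fact (0 < T)] {ι : Type*} {l : Filter ι}

theorem integrable_of_continuousMap_addCircle (μ : Measure (AddCircle T)) [IsFiniteMeasure μ]
    (f : C(AddCircle T, ℂ)) : Integrable f μ :=
  f.continuous.integrable_of_hasCompactSupport (HasCompactSupport.of_compactSpace f)

theorem tendsto_integral_of_mem_span_fourier {μ : ι → ProbabilityMeasure (AddCircle T)}
    {ν : ProbabilityMeasure (AddCircle T)}
    (h : ∀ k : ℤ, Tendsto (fun i => ∫ y, fourier k y ∂(μ i : Measure (AddCircle T))) l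
      (𝓝 (∫ y, fourier k y ∂(ν : Measure (AddCircle T)))))
    {f : C(AddCircle T, ℂ)} (hf : f ∈ Submodule.span ℂ (Set.range (@fourier T))) :
    Tendsto (fun i => ∫ y, f y ∂(μ i : Measure (AddCircle T))) l
      (𝓝 (∫ y, f y ∂(ν : Measure (AddCircle T)))) := by
  induction hf using Submodule.span_induction with
  | mem f hf =>
    obtain ⟨k, rfl⟩ := hf
    exact h k
  | zero => simp [tendsto_const_nhds]
  | add f g _ _ hf hg =>
    simpa only [ContinuousMap.add_apply, integral_add (integrable_of_continuousMap_addCircle _ f)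
      (integrable_of_continuousMap_addCircle _ g)] using hf.add hg
  | smul c f _ hf => simpa only [ContinuousMap.smul_apply, integral_smul] using hf.const_smul c

theorem tendsto_probabilityMeasure_of_tendsto_integral_fourier
    {μ : ι → ProbabilityMeasure (AddCircle T)} {ν : ProbabilityMeasure (AddCircle T)}
    (h : ∀ k : ℤ, Tendsto (fun i => ∫ y, fourier k y ∂(μ i : Measure (AddCircle T))) l
      (𝓝 (∫ y, fourier k y ∂(ν : Measure (AddCircle T))))) :
    Tendsto μ l (𝓝 ν) := by
  refine ProbabilityMeasure.tendsto_of_tight_of_separatesPoints ℂ IsTightMeasureSet.of_compactSpace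
    (A := fourierSubalgebra.comap (BoundedContinuousFunction.toContinuousMapStarₐ (β := ℂ) ℂ))
    (fun x y hxy => ?_) fun g hg => tendsto_integral_of_mem_span_fourier h
      (f := g.toContinuousMap) (fourierSubalgebra_coe ▸ hg)
  obtain ⟨_, ⟨f, hf, rfl⟩, hne⟩ := fourierSubalgebra_separatesPoints hxy
  exact ⟨f, ⟨f, ⟨BoundedContinuousFunction.mkOfCompact f, hf, rfl⟩, rfl⟩, hne⟩

theorem integral_fourier_haarAddCircle_of_ne_zero {k : ℤ} (hk : k ≠ 0) :
    ∫ y, fourier k y ∂(AddCircle.haarAddCircle : Measure (AddCircle T)) = 0 := by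
  simpa [fourierCoeff, Pi.single_apply, hk.symm] using congrFun (fourierCoeff_fourier (T := T) k) 0

/-- The uniform probability measure on the points `x 0, …, x (M - 1)`, counted with multiplicity
(the zero measure if `M = 0`). -/
noncomputable def empiricalMeasure {E : Type*} [MeasurableSpace E] (x : ℕ → E) (M : ℕ) :
    Measure E :=
  (M : ENNReal)⁻¹ • ∑ j ∈ range M, Measure.dirac (x j)

section Empirical

variable {E : Type*} [MeasurableSpace E] (x : ℕ → E) {M : ℕ}

theorem isProbabilityMeasure_empiricalMeasure (hM : M ≠ 0) :
    IsProbabilityMeasure (empiricalMeasure x M) where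
  measure_univ := by
    simpa [empiricalMeasure] using ENNReal.inv_mul_cancel (by simpa using hM) (by simp)

theorem empiricalMeasure_real_apply [MeasurableSingletonClass E] (A : Set E)
    [DecidablePred (· ∈ A)] :
    (empiricalMeasure x M).real A = ((range M).filter (x · ∈ A)).card / M := by
  simp [empiricalMeasure, Measure.real, Measure.finsetSum_apply, Set.indicator_apply,
    Finset.sum_boole, div_eq_inv_mul]

theorem integral_empiricalMeasure [MeasurableSingletonClass E] (f : E → ℂ) :
    ∫ y, f y ∂(empiricalMeasure x M) = (∑ j ∈ range M, f (x j)) / M := by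
  rw [empiricalMeasure, integral_smul_measure, integral_finsetSum_measure]
  · simp [integral_dirac, div_eq_inv_mul]
  · exact fun j _ => integrable_dirac (by simp)

end Empirical

/-- Equidistribution along `l` of the triangular array with rows `x i 0, …, x i (M i - 1)` in the
circle: every set with null boundary asymptotically receives its share of the points. -/
def IsEquidistributed (l : Filter ι) (M : ι → ℕ) (x : ι → ℕ → AddCircle T) : Prop :=
  ∀ A : Set (AddCircle T), AddCircle.haarAddCircle (frontier A) = 0 →
    Tendsto (fun i => (empiricalMeasure (x i) (M i)).real A) l
      (𝓝 (AddCircle.haarAddCircle.real A))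

theorem isEquidistributed_of_tendsto_average_fourier {M : ι → ℕ} (hM : Tendsto M l atTop)
    {x : ι → ℕ → AddCircle T} (hx : ∀ k : ℤ, k ≠ 0 →
      Tendsto (fun i => (∑ j ∈ range (M i), fourier k (x i j)) / (M i : ℂ)) l (𝓝 0)) :
    IsEquidistributed l M x := by
  let haar : ProbabilityMeasure (AddCircle T) := ⟨AddCircle.haarAddCircle, inferInstance⟩
  let μ (i : ι) : ProbabilityMeasure (AddCircle T) :=
    if h : M i = 0 then haar else ⟨_, isProbabilityMeasure_empiricalMeasure (x i) h⟩
  have hμ : ∀ᶠ i in l, (μ i : Measure (AddCircle T)) = empiricalMeasure (x i) (M i) := by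
    filter_upwards [hM.eventually_ne_atTop 0] with i hi
    simp [μ, hi]
  have hlim : Tendsto μ l (𝓝 haar) := by
    refine tendsto_probabilityMeasure_of_tendsto_integral_fourier fun k => ?_
    rcases eq_or_ne k 0 with rfl | hk
    · simp [tendsto_const_nhds]
    · simp only [haar, ProbabilityMeasure.coe_mk, integral_fourier_haarAddCircle_of_ne_zero hk]
      refine (hx k hk).congr' ?_
      filter_upwards [hμ] with i hi
      rw [hi, integral_empiricalMeasure]
  intro A hA
  refine ((ENNReal.tendsto_toReal (measure_ne_top _ A)).comp
    (ProbabilityMeasure.tendsto_measure_of_null_frontier_of_tendsto' hlim hA)).congr' ?_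
  filter_upwards [hμ] with i hi
  rw [Function.comp_apply, hi, Measure.real]

end Weyl

theorem ae_zsmul_coe_neg_div_sq_ne_zero (T : ℝ) {c : ℝ} (hc : c ≠ 0) {k : ℤ} (hk : k ≠ 0) :
    ∀ᵐ t : ℝ, t ∈ Set.Ioc 0 1 → k • ((-(c / t ^ 2) : ℝ) : AddCircle T) ≠ 0 := by
  have hcount : (Set.range fun m : ℤ => √(-(k * c) / (m * T))).Countable := Set.countable_range _
  filter_upwards [hcount.ae_notMem volume] with t ht hmem h0
  rw [← AddCircle.coe_zsmul, AddCircle.coe_eq_zero_iff] at h0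
  obtain ⟨m, hm⟩ := h0
  simp only [zsmul_eq_mul] at hm
  have hk' : (k : ℝ) ≠ 0 := by exact_mod_cast hk
  have ht0 : t ≠ 0 := hmem.1.ne'
  have hsq : -(k * c) / (m * T) = t ^ 2 := by
    rw [hm]
    field_simp
  exact ht ⟨m, by simp only [hsq, Real.sqrt_sq hmem.1.le]⟩

theorem tendsto_div_add_sub_div {ι : Type*} {l : Filter ι} {M : ι → ℕ} (hM : Tendsto M l atTop)
    {X : ι → ℝ} {c : ℝ} (hX : Tendsto (fun i => X i / M i ^ 2) l (𝓝 c)) {t : ℝ} (ht : 0 < t)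
    (h : ℕ) :
    Tendsto (fun i => X i / (⌊t * M i⌋₊ + h + 1 : ℕ) - X i / (⌊t * M i⌋₊ + 1 : ℕ)) l
      (𝓝 (h * -(c / t ^ 2))) := by
  have hMR : Tendsto (fun i => (M i : ℝ)) l atTop := tendsto_natCast_atTop_atTop.comp hM
  have hscale (d : ℕ) : Tendsto (fun i => ((⌊t * M i⌋₊ + d : ℕ) : ℝ) / M i) l (𝓝 t) := by
    simpa [add_div] using ((tendsto_nat_floor_mul_div_atTop ht.le).comp hMR).add
      ((tendsto_const_div_atTop_nhds_zero_nat (d : ℝ)).comp hM)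
  have hlim := ((hX.const_mul (h : ℝ)).div ((hscale (h + 1)).mul (hscale 1)) (by positivity)).neg
  rw [show -((h : ℝ) * c / (t * t)) = h * -(c / t ^ 2) by ring] at hlim
  refine hlim.congr' ?_
  filter_upwards [hM.eventually_gt_atTop 0] with i hi
  have : (0 : ℝ) < M i := by exact_mod_cast hi
  simp only [Pi.div_apply]
  push_cast
  field_simp
  ring

section Increments

variable {T : ℝ} [Fact (0 < T)] {ι : Type*} {l : Filter ι} [l.IsCountablyGenerated]

theorem isEquidistributed_of_tendsto_increments {M : ι → ℕ} (hM : Tendsto M l atTop)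
    {x : ι → ℕ → AddCircle T} {α : ℝ → AddCircle T} (hα : Measurable α)
    (hx : ∀ t ∈ Set.Ioc (0 : ℝ) 1, ∀ h : ℕ,
      Tendsto (fun i => x i (⌊t * M i⌋₊ + h) - x i ⌊t * M i⌋₊) l (𝓝 (h • α t)))
    (hαk : ∀ k : ℤ, k ≠ 0 → ∀ᵐ t : ℝ, t ∈ Set.Ioc 0 1 → k • α t ≠ 0) :
    IsEquidistributed l M x := by
  have hT : T ≠ 0 := (Fact.out : 0 < T).ne'
  refine isEquidistributed_of_tendsto_average_fourier hM fun k hk => ?_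
  simp only [fourier_apply]
  refine tendsto_average_zero_of_locally_geometric (w := fun t => (k • α t).toCircle) hM ?_
    (ae_of_all _ fun t ht h => ?_) ?_
  · exact (fourier k).continuous.measurable.comp hα
  · have hdiv (y z : AddCircle T) :
        (k • y).toCircle / (k • z).toCircle = (k • (y - z)).toCircle := by
      rw [smul_sub, sub_eq_add_neg, AddCircle.toCircle_add, AddCircle.toCircle_neg, div_eq_mul_inv]
    simp only [hdiv, ← AddCircle.toCircle_nsmul, smul_comm h k]
    exact ((AddCircle.continuous_toCircle.comp (continuous_zsmul k)).tendsto _).comp (hx t ht h)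
  · filter_upwards [hαk k hk] with t ht hmem h1
    exact ht hmem (AddCircle.injective_toCircle hT (h1.trans AddCircle.toCircle_zero.symm))

theorem isEquidistributed_coe_div {M : ι → ℕ} (hM : Tendsto M l atTop) {X : ι → ℝ} {c : ℝ}
    (hc : c ≠ 0) (hX : Tendsto (fun i => X i / M i ^ 2) l (𝓝 c)) :
    IsEquidistributed l M fun i j => ((X i / (j + 1 : ℕ) : ℝ) : AddCircle T) := by
  refine isEquidistributed_of_tendsto_increments hM
    (α := fun t => ((-(c / t ^ 2) : ℝ) : AddCircle T)) ?_ (fun t ht h => ?_)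
    fun k hk => ae_zsmul_coe_neg_div_sq_ne_zero T hc hk
  · exact AddCircle.measurable_mk'.comp (by fun_prop)
  · simp only [← AddCircle.coe_sub, ← AddCircle.coe_nsmul, nsmul_eq_mul]
    exact ((AddCircle.continuous_mk' T).tendsto _).comp (tendsto_div_add_sub_div hM hX ht.1 h)

end Increments

section Arcs

variable {T : ℝ}

theorem coe_image_Ico_subset_closedBall (a b : ℝ) :
    ((↑) '' Set.Ico a b : Set (AddCircle T)) ⊆
      Metric.closedBall (((a + b) / 2 : ℝ) : AddCircle T) ((b - a) / 2) := by
  rintro _ ⟨y, hy, rfl⟩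
  rw [Metric.mem_closedBall, dist_eq_norm, ← AddCircle.coe_sub]
  refine (QuotientAddGroup.norm_mk_le_norm (S := AddSubgroup.zmultiples T)).trans ?_
  rw [Real.norm_eq_abs, abs_le]
  constructor <;> linarith [hy.1, hy.2]

theorem ball_subset_coe_image_Ico (a b : ℝ) :
    Metric.ball (((a + b) / 2 : ℝ) : AddCircle T) ((b - a) / 2) ⊆ (↑) '' Set.Ico a b := by
  intro y hy
  rw [Metric.mem_ball, dist_eq_norm, QuotientAddGroup.norm_lt_iff] at hy
  obtain ⟨d, hd, hlt⟩ := hy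
  rw [Real.norm_eq_abs, abs_lt] at hlt
  refine ⟨d + (a + b) / 2, ⟨by linarith, by linarith⟩, ?_⟩
  rw [AddCircle.coe_add]
  exact eq_sub_iff_add_eq.1 hd

theorem coe_mem_coe_image_Ico_iff_floor_modEq {q a : ℕ} {y : ℝ} (hy : 0 ≤ y) :
    (y : AddCircle (q : ℝ)) ∈ ((↑) '' Set.Ico (a : ℝ) (a + 1) : Set (AddCircle (q : ℝ))) ↔
      ⌊y⌋₊ ≡ a [MOD q] := by
  rw [Nat.modEq_iff_dvd, Int.natCast_floor_eq_floor hy]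
  constructor
  · rintro ⟨s, hs, hsy⟩
    rw [← sub_eq_zero, ← AddCircle.coe_sub, AddCircle.coe_eq_zero_iff] at hsy
    obtain ⟨n, hn⟩ := hsy
    have hfloor : ⌊y⌋ = a - n * q := by
      rw [Int.floor_eq_iff]
      push_cast
      rw [zsmul_eq_mul] at hn
      constructor <;> linarith [hs.1, hs.2]
    exact ⟨n, by rw [hfloor]; ring⟩
  · rintro ⟨n, hn⟩
    have hn' : (a : ℝ) - ⌊y⌋ = q * n := by exact_mod_cast hn
    refine ⟨y + q * n, ⟨?_, ?_⟩, ?_⟩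
    · linarith [Int.floor_le y]
    · linarith [Int.lt_floor_add_one y]
    · rw [← sub_eq_zero, ← AddCircle.coe_sub, AddCircle.coe_eq_zero_iff]
      exact ⟨n, by rw [zsmul_eq_mul]; ring⟩

variable [Fact (0 < T)]

theorem volume_coe_image_Ico (a b : ℝ) :
    volume ((↑) '' Set.Ico a b : Set (AddCircle T)) = ENNReal.ofReal (min T (b - a)) := by
  have hball := measure_congr (AddCircle.closedBall_ae_eq_ball
    (x := (((a + b) / 2 : ℝ) : AddCircle T)) (ε := (b - a) / 2))
  have hclosed := AddCircle.volume_closedBall T (x := (((a + b) / 2 : ℝ) : AddCircle T))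
    ((b - a) / 2)
  rw [mul_div_cancel₀ _ two_ne_zero] at hclosed
  rw [← hclosed]
  exact le_antisymm (measure_mono (coe_image_Ico_subset_closedBall a b))
    (hball.trans_le (measure_mono (ball_subset_coe_image_Ico a b)))

theorem volume_frontier_coe_image_Ico (a b : ℝ) :
    volume (frontier ((↑) '' Set.Ico a b : Set (AddCircle T))) = 0 := by
  refine measure_mono_null (t := Metric.closedBall (((a + b) / 2 : ℝ) : AddCircle T) ((b - a) / 2) \
    Metric.ball (((a + b) / 2 : ℝ) : AddCircle T) ((b - a) / 2)) ?_
    (ae_le_set.1 AddCircle.closedBall_ae_eq_ball.le)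
  exact Set.sdiff_subset_sdiff
    (closure_minimal (coe_image_Ico_subset_closedBall a b) Metric.isClosed_closedBall)
    (interior_maximal (ball_subset_coe_image_Ico a b) Metric.isOpen_ball)

theorem IsEquidistributed.tendsto_empiricalMeasure_coe_image_Ico {ι : Type*} {l : Filter ι}
    {M : ι → ℕ} {x : ι → ℕ → AddCircle T} (hx : IsEquidistributed l M x) {a b : ℝ} (hab : a ≤ b)
    (hbT : b ≤ a + T) :
    Tendsto (fun i => (empiricalMeasure (x i) (M i)).real ((↑) '' Set.Ico a b)) l
      (𝓝 ((b - a) / T)) := by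
  have hT : 0 < T := Fact.out
  have hhaar (A : Set (AddCircle T)) :
      ENNReal.ofReal T * AddCircle.haarAddCircle A = volume A := by
    rw [AddCircle.volume_eq_smul_haarAddCircle, Measure.smul_apply, smul_eq_mul]
  have hnull := hhaar (frontier ((↑) '' Set.Ico a b))
  rw [volume_frontier_coe_image_Ico, mul_eq_zero_iff_left (by simpa using hT)] at hnull
  have hmass :
      T * AddCircle.haarAddCircle.real ((↑) '' Set.Ico a b : Set (AddCircle T)) = b - a := by
    have := congrArg ENNReal.toReal (hhaar ((↑) '' Set.Ico a b))
    rwa [volume_coe_image_Ico, min_eq_right (by linarith), ENNReal.toReal_mul,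
      ENNReal.toReal_ofReal hT.le, ENNReal.toReal_ofReal (by linarith)] at this
  rw [← hmass, mul_div_cancel_left₀ _ hT.ne']
  exact hx _ hnull

end Arcs

theorem tendsto_natSqrt_atTop : Tendsto Nat.sqrt atTop atTop :=
  tendsto_atTop.2 fun b => (eventually_ge_atTop (b * b)).mono fun _ hN => Nat.le_sqrt.2 hN

theorem tendsto_div_natSqrt_sq :
    Tendsto (fun N : ℕ => (N : ℝ) / (N.sqrt : ℝ) ^ 2) atTop (𝓝 1) := by
  have hupper : Tendsto (fun N : ℕ => 1 + 2 / (N.sqrt : ℝ)) atTop (𝓝 1) := by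
    simpa using ((tendsto_const_div_atTop_nhds_zero_nat (2 : ℝ)).comp
      tendsto_natSqrt_atTop).const_add 1
  refine tendsto_of_tendsto_of_tendsto_of_le_of_le' tendsto_const_nhds hupper ?_ ?_
  all_goals
    filter_upwards [tendsto_natSqrt_atTop.eventually_gt_atTop 0] with N hN
    have : (0 : ℝ) < N.sqrt := by exact_mod_cast hN
  · rw [one_le_div₀ (by positivity)]
    exact_mod_cast Nat.sqrt_le' N
  · have hN_le : (N : ℝ) ≤ N.sqrt * N.sqrt + N.sqrt + N.sqrt := by exact_mod_cast Nat.sqrt_le_add N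
    rw [div_le_iff₀ (by positivity)]
    refine hN_le.trans_eq ?_
    field_simp
    ring

section ResidueClasses

variable {q : ℕ}

theorem card_filter_Icc_one (p : ℕ → Prop) [DecidablePred p] (M : ℕ) :
    ((Icc 1 M).filter p).card = ((range M).filter fun j => p (j + 1)).card := by
  simp only [Finset.card_filter, Finset.range_eq_Ico,
    Finset.sum_Ico_add' (fun n => if p n then 1 else 0), zero_add,
    Finset.Ico_add_one_right_eq_Icc]

theorem tendsto_card_filter_div_modEq (hq : 1 ≤ q) (a : ℕ) :
    Tendsto (fun N : ℕ => (((Icc 1 N.sqrt).filter fun n => N / n ≡ a [MOD q]).card : ℝ) / N.sqrt)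
      atTop (𝓝 (1 / q)) := by
  classical
  have hq' : (1 : ℝ) ≤ q := by exact_mod_cast hq
  have : Fact ((0 : ℝ) < q) := ⟨by linarith⟩
  have harc := (isEquidistributed_coe_div (T := q) tendsto_natSqrt_atTop one_ne_zero
    tendsto_div_natSqrt_sq).tendsto_empiricalMeasure_coe_image_Ico
    (a := a) (b := a + 1) (by linarith) (by linarith)
  rw [add_sub_cancel_left] at harc
  refine harc.congr fun N => ?_
  simp only [empiricalMeasure_real_apply, card_filter_Icc_one]
  congr 3
  refine Finset.filter_congr fun j _ => ?_
  rw [coe_mem_coe_image_Ico_iff_floor_modEq (by positivity), Nat.floor_div_eq_div]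

theorem abs_card_filter_modEq_sub_div_le_one (hq : 1 ≤ q) (a M : ℕ) :
    |(((Icc 1 M).filter (· ≡ a [MOD q])).card : ℝ) - M / q| ≤ 1 := by
  have hshift (j : ℕ) : j + 1 ≡ a [MOD q] ↔ j ≡ a + (q - 1) [MOD q] := by
    have hperiod : a + (q - 1) + 1 ≡ a [MOD q] := by
      rw [add_assoc, Nat.sub_add_cancel hq]
      exact Nat.add_modEq_right
    exact ⟨fun h => (h.trans hperiod.symm).add_right_cancel' 1,
      fun h => (h.add_right 1).trans hperiod⟩
  have hcard : ((Icc 1 M).filter (· ≡ a [MOD q])).card =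
      M / q + if (a + (q - 1)) % q < M % q then 1 else 0 := by
    rw [card_filter_Icc_one, ← Nat.count_modEq_card M hq, Nat.count_eq_card_filter_range]
    exact congrArg Finset.card (Finset.filter_congr fun j _ => hshift j)
  have hlt := Nat.lt_floor_add_one (M / q : ℝ)
  rw [Nat.floor_div_eq_div] at hlt
  rw [hcard, abs_le]
  split_ifs <;> constructor <;> push_cast <;> linarith [Nat.cast_div_le (α := ℝ) (m := M) (n := q)]

theorem tendsto_card_filter_modEq (hq : 1 ≤ q) (a : ℕ) :
    Tendsto (fun M : ℕ => (((Icc 1 M).filter (· ≡ a [MOD q])).card : ℝ) / M) atTop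
      (𝓝 (1 / q)) := by
  rw [tendsto_iff_dist_tendsto_zero]
  refine squeeze_zero' (Eventually.of_forall fun M => dist_nonneg) ?_
    (tendsto_const_div_atTop_nhds_zero_nat (1 : ℝ))
  filter_upwards [eventually_gt_atTop 0] with M hM
  have hM0 : (0 : ℝ) < M := by exact_mod_cast hM
  rw [Real.dist_eq, show (1 / q : ℝ) = M / q / M by field_simp, ← sub_div, abs_div, abs_of_pos hM0]
  gcongr
  exact abs_card_filter_modEq_sub_div_le_one hq a M

end ResidueClasses

section FloorValues

variable {N : ℕ}

theorem natSqrt_le_div {n : ℕ} (hn : n ∈ Icc 1 N.sqrt) : N.sqrt ≤ N / n := by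
  rw [Finset.mem_Icc] at hn
  exact (Nat.le_div_iff_mul_le hn.1).2 ((Nat.mul_le_mul_left _ hn.2).trans (Nat.sqrt_le N))

theorem div_div_self_of_mem_Icc_natSqrt {n : ℕ} (hn : n ∈ Icc 1 N.sqrt) : N / (N / n) = n := by
  have hle := natSqrt_le_div hn
  rw [Finset.mem_Icc] at hn
  have hdiv := Nat.div_add_mod N n
  have hmod := Nat.mod_lt N hn.1
  rw [Nat.div_eq_iff (by omega)]
  generalize n * (N / n) = w at hdiv ⊢
  omega

/-- The set `S(N) = {⌊N / n⌋ : 1 ≤ n ≤ N}` of floor values of `N`. -/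
def floorValues (N : ℕ) : Finset ℕ :=
  (Icc 1 N).image (N / ·)

theorem floorValues_eq_union :
    floorValues N = Icc 1 N.sqrt ∪ (Icc 1 N.sqrt).image (N / ·) := by
  refine Finset.Subset.antisymm (fun m hm => ?_) (Finset.union_subset (fun m hm => ?_) ?_)
  · obtain ⟨n, hn, rfl⟩ := Finset.mem_image.1 hm
    rw [Finset.mem_Icc] at hn
    rcases le_or_gt n N.sqrt with hle | hlt
    · exact Finset.mem_union_right _ (Finset.mem_image_of_mem _ (Finset.mem_Icc.2 ⟨hn.1, hle⟩))
    · refine Finset.mem_union_left _ (Finset.mem_Icc.2 ⟨Nat.div_pos hn.2 hn.1, ?_⟩)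
      rw [← Nat.lt_succ_iff, Nat.div_lt_iff_lt_mul hn.1]
      exact (Nat.lt_succ_sqrt N).trans_le (Nat.mul_le_mul_left _ hlt)
  · have hpos : 1 ≤ N / m :=
      ((Finset.mem_Icc.1 hm).1.trans (Finset.mem_Icc.1 hm).2).trans (natSqrt_le_div hm)
    exact Finset.mem_image.2 ⟨N / m, Finset.mem_Icc.2 ⟨hpos, Nat.div_le_self N m⟩,
      div_div_self_of_mem_Icc_natSqrt hm⟩
  · exact Finset.image_subset_image (Finset.Icc_subset_Icc_right (Nat.sqrt_le_self N))

theorem Icc_natSqrt_inter_image_div_subset :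
    Icc 1 N.sqrt ∩ (Icc 1 N.sqrt).image (N / ·) ⊆ {N.sqrt} := by
  intro m hm
  obtain ⟨hm, himage⟩ := Finset.mem_inter.1 hm
  obtain ⟨n, hn, rfl⟩ := Finset.mem_image.1 himage
  exact Finset.mem_singleton.2 ((Finset.mem_Icc.1 hm).2.antisymm (natSqrt_le_div hn))

variable (p : ℕ → Prop) [DecidablePred p]

theorem card_filter_image_div_Icc_natSqrt :
    (((Icc 1 N.sqrt).image (N / ·)).filter p).card =
      ((Icc 1 N.sqrt).filter fun n => p (N / n)).card := by
  rw [Finset.filter_image]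
  refine Finset.card_image_of_injOn fun n hn m hm h => ?_
  rw [← div_div_self_of_mem_Icc_natSqrt (Finset.mem_filter.1 hn).1,
    ← div_div_self_of_mem_Icc_natSqrt (Finset.mem_filter.1 hm).1]
  exact congrArg (N / ·) h

theorem card_filter_floorValues_le :
    ((floorValues N).filter p).card ≤
      ((Icc 1 N.sqrt).filter p).card + ((Icc 1 N.sqrt).filter fun n => p (N / n)).card := by
  rw [floorValues_eq_union, Finset.filter_union, ← card_filter_image_div_Icc_natSqrt]
  exact Finset.card_union_le _ _

theorem card_filter_add_card_filter_div_le :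
    ((Icc 1 N.sqrt).filter p).card + ((Icc 1 N.sqrt).filter fun n => p (N / n)).card ≤
      ((floorValues N).filter p).card + 1 := by
  rw [floorValues_eq_union, Finset.filter_union, ← card_filter_image_div_Icc_natSqrt,
    ← Finset.card_union_add_card_inter, ← Finset.filter_inter_distrib]
  gcongr
  exact (Finset.card_filter_le _ _).trans
    (Finset.card_le_card Icc_natSqrt_inter_image_div_subset)

end FloorValues

theorem tendsto_card_floorValues_filter_modEq {q : ℕ} (hq : 1 ≤ q) (a : ℕ) :
    Tendsto (fun N : ℕ => (((floorValues N).filter (· ≡ a [MOD q])).card : ℝ) / N.sqrt) atTop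
      (𝓝 (2 / q)) := by
  have hsum := ((tendsto_card_filter_modEq hq a).comp tendsto_natSqrt_atTop).add
    (tendsto_card_filter_div_modEq hq a)
  rw [← two_mul, mul_one_div] at hsum
  have hlower := hsum.sub ((tendsto_const_div_atTop_nhds_zero_nat (1 : ℝ)).comp
    tendsto_natSqrt_atTop)
  rw [sub_zero] at hlower
  refine tendsto_of_tendsto_of_tendsto_of_le_of_le hlower hsum (fun N => ?_) fun N => ?_
  · simp only [Function.comp_apply, ← add_div, ← sub_div]
    gcongr
    rw [sub_le_iff_le_add]
    exact_mod_cast card_filter_add_card_filter_div_le (· ≡ a [MOD q])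
  · simp only [Function.comp_apply, ← add_div]
    gcongr
    exact_mod_cast card_filter_floorValues_le (· ≡ a [MOD q])

open Filter in
theorem density_in_progression (q a : ℕ) (hq : 1 ≤ q) (ha1 : 1 ≤ a) (ha2 : a ≤ q) :
    Tendsto (fun x : ℝ =>
        ((((Finset.Icc 1 ⌊x⌋₊).image (fun n : ℕ => ⌊x / (n : ℝ)⌋₊)).filter
            (fun m : ℕ => m % q = a % q)).card : ℝ) /
          (((Finset.Icc 1 ⌊x⌋₊).image (fun n : ℕ => ⌊x / (n : ℝ)⌋₊)).card : ℝ))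
      atTop (nhds (1 / q)) := by
  have htotal := tendsto_card_floorValues_filter_modEq le_rfl 0
  simp only [Nat.modEq_one, Finset.filter_true, Nat.cast_one, div_one] at htotal
  have hratio := (tendsto_card_floorValues_filter_modEq hq a).div htotal two_ne_zero
  rw [div_div_cancel_left' two_ne_zero, ← one_div] at hratio
  simp only [Nat.floor_div_natCast]
  refine (hratio.comp (tendsto_nat_floor_atTop (α := ℝ))).congr' ?_
  filter_upwards [(tendsto_natSqrt_atTop.comp
    (tendsto_nat_floor_atTop (α := ℝ))).eventually_ne_atTop 0] with x hx
  exact div_div_div_cancel_right₀ (Nat.cast_ne_zero.2 hx) _ _
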